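/- The critical value function τ : β ↦ τ(β) is left continuous at every point of (1,∞), has right-hand limits at every point of (1,∞), and its set of discontinuity points is countably infinite. -/

import Mathlib

open Set Filter MeasureTheory Topology

noncomputable section

/-- The β-transformation `x ↦ βx - ⌊βx⌋`. -/
def Tbeta (β x : ℝ) : ℝ := Int.fract (β * x)

/-- The survivor set `K_β(t)`: points of `[0,1)` whose orbit never enters `[0,t)`. -/
def survivor (β t : ℝ) : Set ℝ :=
  {x | x ∈ Set.Ico (0 : ℝ) 1 ∧ ∀ n : ℕ, t ≤ (Tbeta β)^[n] x}

/-- The set-valued bifurcation set `E_β`. -/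
def Ebif (β : ℝ) : Set ℝ :=
  {t | t ∈ Set.Ico (0 : ℝ) 1 ∧ ∀ t' : ℝ, t < t' → survivor β t' ≠ survivor β t}

/-- `(c)_β = Σ_{i≥1} c_i β^{-i}` for an infinite digit sequence (indexed from `0`). -/
def valSeq (β : ℝ) (c : ℕ → ℕ) : ℝ := ∑' i : ℕ, (c i : ℝ) / β ^ (i + 1)

/-- `(w 0^∞)_β` for a finite word `w`. -/
def valWord (β : ℝ) (w : List ℕ) : ℝ :=
  ∑ i ∈ Finset.range w.length, (w.getD i 0 : ℝ) / β ^ (i + 1)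

/-- `w⁺`: increment the last letter of `w`. -/
def wplus (w : List ℕ) : List ℕ := w.dropLast ++ [w.getLast! + 1]

/-- `w⁻`: decrement the last letter of `w`. -/
def wminus (w : List ℕ) : List ℕ := w.dropLast ++ [w.getLast! - 1]

/-- `θ`: increment every digit of `w` by one. -/
def theta (w : List ℕ) : List ℕ := w.map (· + 1)

/-- `L(w)`: the lexicographically largest cyclic permutation of `w`. -/
def maxCyc (w : List ℕ) : List ℕ := ((List.range w.length).map w.rotate).foldl max []

/-- `w^∞`: the periodic sequence with period block `w`. -/
def perSeq (w : List ℕ) : ℕ → ℕ := fun i => w.getD (i % w.length) 0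

/-- The sequence given by the word `w` followed by the sequence `c`. -/
def wordSeq (w : List ℕ) (c : ℕ → ℕ) : ℕ → ℕ :=
  fun i => if i < w.length then w.getD i 0 else c (i - w.length)

/-- Strict lexicographic order `≺` on sequences. -/
def seqLt (x y : ℕ → ℕ) : Prop := ∃ n, (∀ i < n, x i = y i) ∧ x n < y n

/-- Lexicographic order `≼` on sequences. -/
def seqLe (x y : ℕ → ℕ) : Prop := x = y ∨ seqLt x y

/-- The `n`-fold left shift `σⁿ` on sequences. -/
def shiftn (n : ℕ) (x : ℕ → ℕ) : ℕ → ℕ := fun i => x (i + n)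

/-- One step of the Farey recursion: insert the concatenation `w_i w_{i+1}`
between consecutive entries. -/
def fareyInsert : List (List ℕ) → List (List ℕ)
  | [] => []
  | [w] => [w]
  | w :: v :: rest => w :: (w ++ v) :: fareyInsert (v :: rest)

/-- The ordered set `F_n` of Farey words of level `n`. -/
def fareyLevel : ℕ → List (List ℕ)
  | 0 => [[0], [1]]
  | n + 1 => fareyInsert (fareyLevel n)

/-- `F`: all Farey words of length at least two. -/
def FareySet : Set (List ℕ) := {w | (∃ n, w ∈ fareyLevel n) ∧ w ≠ [0] ∧ w ≠ [1]}

/-- `F̂ = F ∪ {1}`. -/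
def FareyHat : Set (List ℕ) := FareySet ∪ {[1]}

/-- The extended Farey set `F_e = {θ^k(w) : w ∈ F̂, k ≥ 0}`. -/
def FareyExt : Set (List ℕ) := {w | ∃ v ∈ FareyHat, ∃ k : ℕ, w = theta^[k] v}

/-- A nonempty word is Lyndon iff it is strictly smaller than each of its nontrivial
cyclic rotations (equivalently: aperiodic and lexicographically smallest among its
cyclic permutations). -/
def IsLyndon (w : List ℕ) : Prop := w ≠ [] ∧ ∀ i, 0 < i → i < w.length → w < w.rotate i

/-- `L_e`: all Lyndon words over `ℕ ∪ {0}` except the single-letter word `0`. -/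
def LyndonExt : Set (List ℕ) := {w | IsLyndon w ∧ w ≠ [0]}

/-- `L`: Lyndon words over `{0,1}` of length at least `2`. -/
def LyndonBin : Set (List ℕ) := {w | IsLyndon w ∧ 2 ≤ w.length ∧ ∀ d ∈ w, d ≤ 1}

/-- The block of `Φ_s` emitted for current digit `d` after previous digit `p`:
`L(s)` for `00`, `s⁻` for `10`, `L(s)⁺` for `01`, `s` for `11`. -/
def phiBlock (s : List ℕ) (p d : ℕ) : List ℕ :=
  if d = 0 then (if p = 0 then maxCyc s else wminus s)
  else (if p = 0 then wplus (maxCyc s) else s)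

def phiAux (s : List ℕ) : ℕ → List ℕ → List ℕ
  | _, [] => []
  | p, d :: rest => phiBlock s p d ++ phiAux s d rest

/-- The substitution `Φ_s` on finite words; `s • r = subst s r`.  An initial digit `0`
produces `s⁻`, an initial digit `1` produces `L(s)⁺`, and thereafter runs
`0^k` resp. `1^l` produce `L(s)^{k-1}` resp. `s^{l-1}`, in accordance with
`Φ_s(0^{k₁}1^{l₁}…) = s⁻ L(s)^{k₁-1} L(s)⁺ s^{l₁-1} …` and
`Φ_s(1^{k₁}0^{l₁}…) = L(s)⁺ s^{k₁-1} s⁻ L(s)^{l₁-1} …`. -/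
def subst (s r : List ℕ) : List ℕ :=
  match r with
  | [] => []
  | d :: rest => phiBlock s (1 - d) d ++ phiAux s d rest

/-- The substitution `Φ_s` on infinite sequences, as the limit of its values
on initial segments (each digit contributes a nonempty block, so the `i`-th letter
is determined by the first `i+1` digits). -/
def phiSeq (s : List ℕ) (c : ℕ → ℕ) : ℕ → ℕ :=
  fun i => (subst s (List.ofFn fun j : Fin (i + 1) => c j)).getD i 0

/-- `Λ_e(m) = {s₁ • s₂ • … • s_m : s₁ ∈ F_e, s₂,…,s_m ∈ F}`. -/
def LambdaE (m : ℕ) : Set (List ℕ) :=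
  {w | ∃ s₁ ∈ FareyExt, ∃ rs : List (List ℕ),
    rs.length = m - 1 ∧ (∀ r ∈ rs, r ∈ FareySet) ∧ w = rs.foldl subst s₁}

/-- `Λ_e = ∪_{m≥1} Λ_e(m)`. -/
def LambdaExt : Set (List ℕ) := ⋃ m ∈ Set.Ici 1, LambdaE m

/-- `β_ℓ^S`: the base `β > 1` with `(L(S)^∞)_β = 1` (it is unique since
`β ↦ (c)_β` is strictly decreasing). -/
def betaL (S : List ℕ) : ℝ :=
  Classical.epsilon fun β : ℝ => 1 < β ∧ valSeq β (perSeq (maxCyc S)) = 1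

/-- `β_*^S`: the base `β > 1` with `(L(S)⁺ S⁻ L(S)^∞)_β = 1`. -/
def betaStar (S : List ℕ) : ℝ :=
  Classical.epsilon fun β : ℝ =>
    1 < β ∧ valSeq β (wordSeq (wplus (maxCyc S) ++ wminus S) (perSeq (maxCyc S))) = 1

/-- `β_r^S`: the base `β > 1` with `(L(S)⁺ S^∞)_β = 1`. -/
def betaR (S : List ℕ) : ℝ :=
  Classical.epsilon fun β : ℝ => 1 < β ∧ valSeq β (wordSeq (wplus (maxCyc S)) (perSeq S)) = 1

/-- The Lyndon/Farey interval `J^S = [β_ℓ^S, β_r^S]`. -/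
def Jint (S : List ℕ) : Set ℝ := Set.Icc (betaL S) (betaR S)

/-- The basic interval `I^S = [β_ℓ^S, β_*^S]`. -/
def Iint (S : List ℕ) : Set ℝ := Set.Icc (betaL S) (betaStar S)

/-- The exceptional set `E = (1,∞) ∖ ∪_{s ∈ F_e} J^s`. -/
def Eexc : Set ℝ := Set.Ioi 1 \ ⋃ s ∈ FareyExt, Jint s

/-- The relative exceptional set `E^S = (J^S ∖ I^S) ∖ ∪_{r ∈ F} J^{S•r}`. -/
def EexcRel (S : List ℕ) : Set ℝ :=
  (Jint S \ Iint S) \ ⋃ r ∈ FareySet, Jint (subst S r)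

/-- The infinitely renormalizable set `E_∞ = ∩_{m≥1} ∪_{S ∈ Λ_e(m)} J^S`. -/
def Einf : Set ℝ := ⋂ m ∈ Set.Ici 1, ⋃ S ∈ LambdaE m, Jint S

/-- `E_L = E ∪ {β_ℓ^s : s ∈ F_e}`. -/
def EL : Set ℝ := Eexc ∪ {x | ∃ s ∈ FareyExt, x = betaL s}

/-- The critical value `τ(β) = min{t > 0 : dim_H K_β(t) = 0}`. -/
def tau (β : ℝ) : ℝ := sInf {t : ℝ | 0 < t ∧ dimH (survivor β t) = 0}

end

/-!
If `τ(β) > t > 0`, the survivor set at level `t` is uncountable, hence contains a point with an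
infinite orbit, since only countably many points have a finite one. Some point `ξ` of such an orbit
is visited again infinitely often from just above. Two of these returns read off two words whose
inverse branches map a short interval `[ξ - δ, ξ]` into itself and have different fixed points, that
is, a horseshoe inside the survivor set of level `t - δ`. It has positive dimension, and it persists
for all bases close to `β`. Hence `τ` is lower semicontinuous.

Reading base `a` digits in a base `b > a` lowers every point of an orbit by at most
`(b - a) / (b - 1)`, whence `τ(a) ≤ τ(b) + (b - a) / (b - 1)` and `τ(β) + log (β - 1)` is
nondecreasing. So `τ` has right limits and at most countably many discontinuities, and together with
lower semicontinuity it is left continuous.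

For `k ≥ 1` there is a jump at the base `β ∈ (k + 1, k + 2)` with `k / (β - 1) + 1 / β = 1`. In this
base only the expansion `kkk…` survives at level `k / β`, so `τ(β) ≤ k / β`. In every base `b > β`
the words `k` and `(k + 1)k…k` (with enough letters `k`) can be freely concatenated, so
`τ(b) ≥ k / (b - 1)`, and this tends to `k / (β - 1) > k / β` as `b` decreases to `β`.
-/

lemma holderOnWith_of_dist_le {X Y : Type*} [PseudoMetricSpace X] [PseudoMetricSpace Y]
    {C r : NNReal} {f : X → Y} {s : Set X}
    (h : ∀ x ∈ s, ∀ y ∈ s, dist (f x) (f y) ≤ C * dist x y ^ (r : ℝ)) : HolderOnWith C r f s := by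
  intro x hx y hy
  rw [edist_dist, edist_dist, ENNReal.ofReal_rpow_of_nonneg dist_nonneg r.coe_nonneg,
    ← ENNReal.ofReal_coe_nnreal, ← ENNReal.ofReal_mul C.coe_nonneg]
  exact ENNReal.ofReal_le_ofReal (h x hx y hy)

section Coding

variable {X : Type*} [MetricSpace X] {b : ℕ} {x : (ℕ → Fin b) → X} {C ρ : ℝ}

lemma injective_of_mul_pow_firstDiff_le_dist (hC : 0 < C) (hρ : 0 < ρ)
    (h : ∀ ω ω', ω ≠ ω' → C * ρ ^ PiNat.firstDiff ω ω' ≤ dist (x ω) (x ω')) :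
    Function.Injective x := by
  intro ω ω' heq
  by_contra hne
  have hle := h ω ω' hne
  rw [heq, dist_self] at hle
  exact hle.not_gt (by positivity)

lemma dist_ofDigits_le_of_mul_pow_firstDiff_le_dist (hb : 1 < b) (hC : 0 < C) (hρ0 : 0 < ρ)
    (hρ1 : ρ < 1) (h : ∀ ω ω', ω ≠ ω' → C * ρ ^ PiNat.firstDiff ω ω' ≤ dist (x ω) (x ω'))
    (ω ω' : ℕ → Fin b) :
    dist (Real.ofDigits ω) (Real.ofDigits ω') ≤
      C⁻¹ ^ Real.logb ρ⁻¹ b * dist (x ω) (x ω') ^ Real.logb ρ⁻¹ b := by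
  rcases eq_or_ne ω ω' with rfl | hne
  · rw [dist_self]
    positivity
  set n := PiNat.firstDiff ω ω'
  have hρ : 1 < ρ⁻¹ := one_lt_inv₀ hρ0 |>.2 hρ1
  have hr : 0 ≤ Real.logb ρ⁻¹ b := Real.logb_nonneg hρ (by exact_mod_cast hb.le)
  have hbpow : (b : ℝ)⁻¹ = ρ ^ Real.logb ρ⁻¹ b := by
    rw [← inv_inv ρ, Real.inv_rpow (by positivity), inv_inv ρ,
      Real.rpow_logb (by positivity) hρ.ne' (by positivity)]
  calc dist (Real.ofDigits ω) (Real.ofDigits ω') ≤ ((b : ℝ) ^ n)⁻¹ :=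
        Real.abs_ofDigits_sub_ofDigits_le fun _ => PiNat.apply_eq_of_lt_firstDiff
    _ = (ρ ^ n) ^ Real.logb ρ⁻¹ b := by
        rw [← inv_pow, hbpow, ← Real.rpow_mul_natCast hρ0.le, mul_comm,
          Real.rpow_natCast_mul hρ0.le]
    _ ≤ (C⁻¹ * dist (x ω) (x ω')) ^ Real.logb ρ⁻¹ b := by
        gcongr
        exact le_inv_mul_iff₀ hC |>.2 (h ω ω' hne)
    _ = _ := Real.mul_rpow (by positivity) dist_nonneg

theorem ofReal_logb_le_dimH_range_of_mul_pow_firstDiff_le_dist (hb : 1 < b) (hC : 0 < C)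
    (hρ0 : 0 < ρ) (hρ1 : ρ < 1)
    (h : ∀ ω ω', ω ≠ ω' → C * ρ ^ PiNat.firstDiff ω ω' ≤ dist (x ω) (x ω')) :
    ENNReal.ofReal (Real.logb ρ⁻¹ b) ≤ dimH (range x) := by
  have hr : 0 < Real.logb ρ⁻¹ b :=
    Real.logb_pos (one_lt_inv₀ hρ0 |>.2 hρ1) (by exact_mod_cast hb)
  set r : NNReal := ⟨Real.logb ρ⁻¹ b, hr.le⟩
  have hr' : 0 < r := hr
  have : Nonempty (ℕ → Fin b) := ⟨fun _ => ⟨0, by omega⟩⟩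
  let g : X → ℝ := Real.ofDigits ∘ Function.invFun x
  have hg : ∀ ω, g (x ω) = Real.ofDigits ω := fun ω => congrArg Real.ofDigits
    (Function.leftInverse_invFun (injective_of_mul_pow_firstDiff_le_dist hC hρ0 h) ω)
  have hHolder : HolderOnWith ⟨C⁻¹ ^ Real.logb ρ⁻¹ b, by positivity⟩ r g (range x) := by
    refine holderOnWith_of_dist_le ?_
    rintro _ ⟨ω, rfl⟩ _ ⟨ω', rfl⟩
    rw [hg, hg]
    exact dist_ofDigits_le_of_mul_pow_firstDiff_le_dist hb hC hρ0 hρ1 h ω ω'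
  have hsub : Icc (0 : ℝ) 1 ⊆ g '' range x := fun y hy => by
    obtain ⟨ω, -, hω⟩ := Real.ofDigits_SurjOn hb hy
    exact ⟨x ω, ⟨ω, rfl⟩, (hg ω).trans hω⟩
  have hdim : (1 : ENNReal) ≤ dimH (range x) / r := calc
    (1 : ENNReal) = dimH (Icc (0 : ℝ) 1) := by
      rw [Real.dimH_of_nonempty_interior (by simp), Module.finrank_self, Nat.cast_one]
    _ ≤ dimH (range x) / r := (dimH_mono hsub).trans (hHolder.dimH_image_le hr')
  rw [ENNReal.le_div_iff_mul_le (.inl (ENNReal.coe_ne_zero.2 hr'.ne')) (.inl ENNReal.coe_ne_top),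
    one_mul] at hdim
  rwa [ENNReal.ofReal_eq_coe_nnreal hr.le]

end Coding

lemma norm_sub_eq_of_ne {E : Type*} [SeminormedAddCommGroup E] (c : Fin 2 → E) {i j : Fin 2}
    (h : i ≠ j) : ‖c i - c j‖ = ‖c 0 - c 1‖ := by
  fin_cases i <;> fin_cases j <;> simp_all [norm_sub_rev]

section HomothetyCoding

variable {ι E : Type*} [NormedAddCommGroup E] [NormedSpace ℝ E] {ρ : ℝ}

/-- The point of the self-similar set of the homotheties `s ↦ c i + ρ • s` that has address `ω`. -/
noncomputable def homothetyCoding (ρ : ℝ) (c : ι → E) (ω : ℕ → ι) : E := ∑' k, ρ ^ k • c (ω k)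

variable [CompleteSpace E]

lemma summable_pow_smul_comp [Finite ι] (h0 : 0 ≤ ρ) (h1 : ρ < 1) (c : ι → E) (ω : ℕ → ι) :
    Summable fun k => ρ ^ k • c (ω k) := by
  obtain ⟨B, hB⟩ := (finite_range fun i => ‖c i‖).bddAbove
  refine .of_norm_bounded ((summable_geometric_of_lt_one h0 h1).mul_right B) fun k => ?_
  rw [norm_smul, Real.norm_of_nonneg (by positivity)]
  exact mul_le_mul_of_nonneg_left (hB ⟨ω k, rfl⟩) (by positivity)

lemma homothetyCoding_eq_sum_add [Finite ι] (h0 : 0 ≤ ρ) (h1 : ρ < 1) (c : ι → E) (ω : ℕ → ι)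
    (n : ℕ) : homothetyCoding ρ c ω =
      ∑ k ∈ Finset.range n, ρ ^ k • c (ω k) + ρ ^ n • homothetyCoding ρ c fun k => ω (k + n) := by
  rw [homothetyCoding, ← (summable_pow_smul_comp h0 h1 c ω).sum_add_tsum_nat_add n,
    homothetyCoding, ← (summable_pow_smul_comp h0 h1 c _).tsum_const_smul]
  simp only [smul_smul, ← pow_add, add_comm n]

lemma homothetyCoding_mem_of_mapsTo [Finite ι] (h0 : 0 ≤ ρ) (h1 : ρ < 1) {c : ι → E} {S : Set E}
    (hS : IsClosed S) (hne : S.Nonempty) (hmaps : ∀ i, MapsTo (fun s => c i + ρ • s) S S)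
    (ω : ℕ → ι) : homothetyCoding ρ c ω ∈ S := by
  obtain ⟨s, hs⟩ := hne
  have hmem : ∀ (n : ℕ) (ω : ℕ → ι), ∑ k ∈ Finset.range n, ρ ^ k • c (ω k) + ρ ^ n • s ∈ S := by
    intro n
    induction n with
    | zero => simpa using fun _ => hs
    | succ n ih =>
      intro ω
      convert hmaps (ω 0) (ih fun k => ω (k + 1)) using 1
      simp only [Finset.sum_range_succ', smul_add, Finset.smul_sum, smul_smul, pow_succ']
      simp only [pow_zero, one_smul]
      abel
  have hlim := (summable_pow_smul_comp h0 h1 c ω).hasSum.tendsto_sum_nat.add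
    ((tendsto_pow_atTop_nhds_zero_of_lt_one h0 h1).smul_const s)
  rw [zero_smul, add_zero] at hlim
  exact hS.mem_of_tendsto hlim (.of_forall fun n => hmem n ω)

lemma homothetyCoding_comp_div [Finite ι] (h0 : 0 ≤ ρ) (h1 : ρ < 1) (c : ι → E) (ω : ℕ → ι)
    {m : ℕ} (hm : m ≠ 0) : homothetyCoding ρ c (fun k => ω (k / m)) =
      homothetyCoding (ρ ^ m) (fun i => (∑ j ∈ Finset.range m, ρ ^ j) • c i) ω := by
  have : NeZero m := ⟨hm⟩
  have hsum := (Nat.divModEquiv m).symm.summable_iff.2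
    (summable_pow_smul_comp h0 h1 c fun k => ω (k / m))
  have hregroup : homothetyCoding ρ c (fun k => ω (k / m)) =
      ∑' (n : ℕ) (j : Fin m), ρ ^ (n * m + j : ℕ) • c (ω ((n * m + j) / m)) :=
    ((Nat.divModEquiv m).symm.tsum_eq _).symm.trans hsum.tsum_prod
  rw [hregroup, homothetyCoding]
  refine tsum_congr fun n => ?_
  have hdiv : ∀ j : Fin m, (n * m + j : ℕ) / m = n := fun j => by
    rw [mul_comm, Nat.mul_add_div (NeZero.pos m), Nat.div_eq_of_lt j.2, add_zero]
  simp only [hdiv, tsum_fintype, Finset.sum_range, ← pow_mul, mul_comm m n, Finset.sum_smul,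
    Finset.smul_sum, pow_add, mul_smul]

variable {c : Fin 2 → E}

lemma norm_homothetyCoding_sub_le (h0 : 0 ≤ ρ) (h1 : ρ < 1) (ω ω' : ℕ → Fin 2) :
    ‖homothetyCoding ρ c ω - homothetyCoding ρ c ω'‖ ≤ (1 - ρ)⁻¹ * ‖c 0 - c 1‖ := by
  rw [homothetyCoding, homothetyCoding,
    ← (summable_pow_smul_comp h0 h1 c ω).tsum_sub (summable_pow_smul_comp h0 h1 c ω')]
  refine tsum_of_norm_bounded ((hasSum_geometric_of_lt_one h0 h1).mul_right _) fun k => ?_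
  rw [← smul_sub, norm_smul, Real.norm_of_nonneg (by positivity)]
  gcongr
  rcases eq_or_ne (ω k) (ω' k) with h | h
  · simp [h]
  · exact (norm_sub_eq_of_ne c h).le

lemma mul_pow_firstDiff_le_norm_homothetyCoding_sub (h0 : 0 ≤ ρ) (h1 : ρ < 1) {ω ω' : ℕ → Fin 2}
    (hne : ω ≠ ω') : (1 - ρ * (1 - ρ)⁻¹) * ‖c 0 - c 1‖ * ρ ^ PiNat.firstDiff ω ω' ≤
      ‖homothetyCoding ρ c ω - homothetyCoding ρ c ω'‖ := by
  set n := PiNat.firstDiff ω ω'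
  set X := homothetyCoding ρ c fun k => ω (k + n + 1)
  set Y := homothetyCoding ρ c fun k => ω' (k + n + 1)
  have hfactor : homothetyCoding ρ c ω - homothetyCoding ρ c ω' =
      ρ ^ n • (c (ω n) - c (ω' n) + ρ • (X - Y)) := by
    have hagree : ∀ k ∈ Finset.range n, ρ ^ k • c (ω k) = ρ ^ k • c (ω' k) := fun k hk => by
      rw [PiNat.apply_eq_of_lt_firstDiff (Finset.mem_range.1 hk)]
    rw [homothetyCoding_eq_sum_add h0 h1 c ω (n + 1), homothetyCoding_eq_sum_add h0 h1 c ω' (n + 1),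
      Finset.sum_range_succ, Finset.sum_range_succ, Finset.sum_congr rfl hagree, pow_succ]
    module
  have htail : ‖ρ • (X - Y)‖ ≤ ρ * ((1 - ρ)⁻¹ * ‖c 0 - c 1‖) := by
    rw [norm_smul, Real.norm_of_nonneg h0]
    exact mul_le_mul_of_nonneg_left (norm_homothetyCoding_sub_le h0 h1 _ _) h0
  have hhead := norm_sub_eq_of_ne c (PiNat.apply_firstDiff_ne hne)
  rw [hfactor, norm_smul, Real.norm_of_nonneg (by positivity), mul_comm]
  have := norm_sub_le_norm_add (c (ω n) - c (ω' n)) (ρ • (X - Y))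
  gcongr
  linarith

lemma ofReal_logb_le_dimH_range_homothetyCoding (h0 : 0 < ρ) (h1 : ρ < 1 / 2) (hc : c 0 ≠ c 1) :
    ENNReal.ofReal (Real.logb ρ⁻¹ 2) ≤ dimH (range (homothetyCoding ρ c)) := by
  have hgap : 0 < 1 - ρ * (1 - ρ)⁻¹ := by
    rw [sub_pos, ← div_eq_mul_inv, div_lt_one (by linarith)]
    linarith
  have hC : 0 < (1 - ρ * (1 - ρ)⁻¹) * ‖c 0 - c 1‖ := mul_pos hgap (norm_sub_pos_iff.2 hc)
  refine mod_cast ofReal_logb_le_dimH_range_of_mul_pow_firstDiff_le_dist one_lt_two hC h0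
    (by linarith) fun ω ω' hne => ?_
  rw [dist_eq_norm]
  exact mul_pow_firstDiff_le_norm_homothetyCoding_sub h0.le (by linarith) hne

theorem dimH_range_homothetyCoding_ne_zero (h0 : 0 < ρ) (h1 : ρ < 1) (hc : c 0 ≠ c 1) :
    dimH (range (homothetyCoding ρ c)) ≠ 0 := by
  -- Using only addresses whose digits come in runs of length `m` replaces `ρ` by `ρ ^ m < 1 / 2`.
  obtain ⟨m, hm⟩ := exists_pow_lt_of_lt_one (by norm_num : (0 : ℝ) < 1 / 2) h1
  have hm0 : m ≠ 0 := by
    rintro rfl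
    norm_num at hm
  set σ := ∑ j ∈ Finset.range m, ρ ^ j
  have hσ : σ ≠ 0 := (geom_sum_pos h0.le hm0).ne'
  have hblocks :
      range (homothetyCoding (ρ ^ m) fun i => σ • c i) ⊆ range (homothetyCoding ρ c) := by
    rintro _ ⟨ω, rfl⟩
    exact ⟨_, homothetyCoding_comp_div h0.le h1 c ω hm0⟩
  have hpos : 0 < Real.logb (ρ ^ m)⁻¹ 2 :=
    Real.logb_pos (one_lt_inv₀ (by positivity) |>.2 (by linarith)) one_lt_two
  have hle := (ofReal_logb_le_dimH_range_homothetyCoding (pow_pos h0 m) hm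
    ((smul_right_injective E hσ).ne hc)).trans (dimH_mono hblocks)
  exact ((ENNReal.ofReal_pos.2 hpos).trans_le hle).ne'

end HomothetyCoding

section InverseBranch

variable {β t l h s : ℝ} {u v w : List ℕ}

/-- The value `(w s)_β` of the word `w` followed by an expansion of `s`. As a function of `s` it is
the inverse branch of the iterate of `Tbeta β` of order `w.length` given by the digits `w`. -/
noncomputable def invBranch (β : ℝ) (w : List ℕ) (s : ℝ) : ℝ :=
  w.foldr (fun (d : ℕ) r => (d + r) / β) s

@[simp] lemma invBranch_nil (β s : ℝ) : invBranch β [] s = s := rfl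

@[simp] lemma invBranch_cons (β : ℝ) (d : ℕ) (w : List ℕ) (s : ℝ) :
    invBranch β (d :: w) s = (d + invBranch β w s) / β := rfl

lemma invBranch_append (β : ℝ) (u v : List ℕ) (s : ℝ) :
    invBranch β (u ++ v) s = invBranch β u (invBranch β v s) := by
  rw [invBranch, List.foldr_append]
  rfl

lemma invBranch_eq_add_div (β : ℝ) (w : List ℕ) (r s : ℝ) :
    invBranch β w s = invBranch β w r + (s - r) / β ^ w.length := by
  induction w with
  | nil => simp
  | cons d w ih =>
    rw [invBranch_cons, invBranch_cons, ih, List.length_cons, pow_succ, ← div_div]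
    ring

lemma monotone_invBranch (hβ : 0 ≤ β) (w : List ℕ) : Monotone (invBranch β w) := by
  intro r s hrs
  rw [invBranch_eq_add_div β w r s]
  have : 0 ≤ (s - r) / β ^ w.length := div_nonneg (by linarith) (by positivity)
  linarith

lemma continuousAt_invBranch (hβ : β ≠ 0) (w : List ℕ) (s : ℝ) :
    ContinuousAt (fun b => invBranch b w s) β := by
  induction w with
  | nil => exact continuousAt_const
  | cons d w ih => exact (continuousAt_const.add ih).div continuousAt_id hβ

lemma iterate_Tbeta_invBranch_append (hβ : β ≠ 0)
    (hmem : ∀ w, w <:+ u ++ v → invBranch β w s ∈ Ico (0 : ℝ) 1) :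
    (Tbeta β)^[u.length] (invBranch β (u ++ v) s) = invBranch β v s := by
  induction u with
  | nil => rfl
  | cons d u ih =>
    have hT : Tbeta β (invBranch β (d :: u ++ v) s) = invBranch β (u ++ v) s := by
      rw [Tbeta, List.cons_append, invBranch_cons, mul_div_cancel₀ _ hβ, Int.fract_natCast_add]
      exact Int.fract_eq_self.2 (hmem _ (List.suffix_cons d _))
    rw [List.length_cons, Function.iterate_succ_apply, hT]
    exact ih fun w hw => hmem w (hw.trans (List.suffix_cons d _))

lemma subset_survivor_of_forall_exists_iterate_mem {S : Set ℝ} (hS : S ⊆ Ico 0 1)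
    (h : ∀ x ∈ S, ∃ n, 0 < n ∧ (Tbeta β)^[n] x ∈ S ∧ ∀ k < n, t ≤ (Tbeta β)^[k] x) :
    S ⊆ survivor β t := by
  intro x hx
  refine ⟨hS hx, fun k => ?_⟩
  induction k using Nat.strong_induction_on generalizing x with
  | _ k ih =>
    obtain ⟨n, hn, hmem, hle⟩ := h x hx
    obtain hk | hk := lt_or_ge k n
    · exact hle k hk
    · obtain ⟨m, rfl⟩ := Nat.exists_eq_add_of_le' hk
      rw [Function.iterate_add_apply]
      exact ih m (by omega) hmem

/-- The inverse branch of `w` returns `[l, h]` to itself and the points visited on the way lie in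
`[t, 1)`. -/
structure IsReturnWord (β t l h : ℝ) (w : List ℕ) : Prop where
  ne_nil : w ≠ []
  mapsTo : MapsTo (invBranch β w) (Icc l h) (Icc l h)
  suffix_mapsTo : ∀ v, v <:+ w → v ≠ [] → MapsTo (invBranch β v) (Icc l h) (Ico t 1)

namespace IsReturnWord

lemma of_endpoints (hβ : 0 ≤ β) (hw : w ≠ []) (hl : l ≤ invBranch β w l) (hh : invBranch β w h ≤ h)
    (hsuffix : ∀ v, v <:+ w → v ≠ [] → t ≤ invBranch β v l ∧ invBranch β v h < 1) :
    IsReturnWord β t l h w where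
  ne_nil := hw
  mapsTo _ hs := ⟨hl.trans (monotone_invBranch hβ w hs.1), (monotone_invBranch hβ w hs.2).trans hh⟩
  suffix_mapsTo v hv hne _ hs := ⟨(hsuffix v hv hne).1.trans (monotone_invBranch hβ v hs.1),
    (monotone_invBranch hβ v hs.2).trans_lt (hsuffix v hv hne).2⟩

lemma eventually_of_endpoints (hβ : 0 < β) (hw : w ≠ []) (hl : l < invBranch β w l)
    (hh : invBranch β w h < h)
    (hsuffix : ∀ v, v <:+ w → v ≠ [] → t < invBranch β v l ∧ invBranch β v h < 1) :
    ∀ᶠ b in 𝓝 β, IsReturnWord b t l h w := by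
  have hcont (v : List ℕ) (s : ℝ) := continuousAt_invBranch hβ.ne' v s
  have hfinite : {v | v <:+ w}.Finite := by
    simpa only [List.mem_tails] using w.tails.finite_toSet
  have hev : ∀ᶠ b in 𝓝 β, ∀ v ∈ {v | v <:+ w}, v ≠ [] →
      t ≤ invBranch b v l ∧ invBranch b v h < 1 := by
    refine (eventually_all_finite hfinite).2 fun v hv => ?_
    refine eventually_imp_distrib_left.2 fun hne => ?_
    filter_upwards [(hcont v l).eventually_const_lt (hsuffix v hv hne).1,
      (hcont v h).eventually_lt_const (hsuffix v hv hne).2] with b h1 h2 using ⟨h1.le, h2⟩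
  filter_upwards [hev, (hcont w l).eventually_const_lt hl, (hcont w h).eventually_lt_const hh,
    eventually_gt_nhds hβ] with b hb hbl hbh hb0 using .of_endpoints hb0.le hw hbl.le hbh.le hb

lemma append (hu : IsReturnWord β t l h u) (hv : IsReturnWord β t l h v) :
    IsReturnWord β t l h (u ++ v) where
  ne_nil := List.append_ne_nil_of_left_ne_nil hu.ne_nil v
  mapsTo _ hs := by
    rw [invBranch_append]
    exact hu.mapsTo (hv.mapsTo hs)
  suffix_mapsTo w hw hne s hs := by
    rcases List.suffix_or_suffix_of_suffix hw (List.suffix_append u v) with hwv | ⟨u', rfl⟩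
    · exact hv.suffix_mapsTo w hwv hne hs
    · rcases eq_or_ne u' [] with rfl | hu'
      · exact hv.suffix_mapsTo v List.suffix_rfl hv.ne_nil hs
      · rw [invBranch_append]
        exact hu.suffix_mapsTo u' (List.suffix_append_self_iff.1 hw) hu' (hv.mapsTo hs)

lemma iterate_Tbeta_invBranch (hw : IsReturnWord β t l h w) (hβ : β ≠ 0) (ht : 0 ≤ t)
    (hs : s ∈ Icc l h) (hs01 : s ∈ Ico (0 : ℝ) 1) :
    (Tbeta β)^[w.length] (invBranch β w s) = s ∧
      ∀ k < w.length, t ≤ (Tbeta β)^[k] (invBranch β w s) := by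
  have hmem : ∀ v, v <:+ w → invBranch β v s ∈ Ico (0 : ℝ) 1 := fun v hv => by
    rcases eq_or_ne v [] with rfl | hne
    · exact hs01
    · exact Ico_subset_Ico_left ht (hw.suffix_mapsTo v hv hne hs)
  have hiter : ∀ u v, u ++ v = w → (Tbeta β)^[u.length] (invBranch β w s) = invBranch β v s := by
    rintro u v rfl
    exact iterate_Tbeta_invBranch_append hβ hmem
  refine ⟨hiter w [] (List.append_nil w), fun k hk => ?_⟩
  have hTk := hiter _ _ (w.take_append_drop k)
  rw [List.length_take_of_le hk.le] at hTk
  rw [hTk]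
  exact (hw.suffix_mapsTo _ (List.drop_suffix k w) (by simpa using hk) hs).1

end IsReturnWord

theorem dimH_survivor_ne_zero_of_length_eq (hβ : 1 < β) (ht : 0 ≤ t) (hlh : l ≤ h)
    (hu : IsReturnWord β t l h u) (hv : IsReturnWord β t l h v) (hlen : u.length = v.length)
    (hne : invBranch β u 0 ≠ invBranch β v 0) : dimH (survivor β t) ≠ 0 := by
  set n := u.length
  set w : Fin 2 → List ℕ := ![u, v]
  have hw : ∀ i, IsReturnWord β t l h (w i) := Fin.forall_fin_two.2 ⟨hu, hv⟩
  have hwlen : ∀ i, (w i).length = n := Fin.forall_fin_two.2 ⟨rfl, hlen.symm⟩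
  set ρ : ℝ := (β ^ n)⁻¹
  set c : Fin 2 → ℝ := fun i => invBranch β (w i) 0
  have hn0 : n ≠ 0 := (List.length_pos_iff.2 hu.ne_nil).ne'
  have hρ0 : 0 < ρ := by positivity
  have hρ1 : ρ < 1 := inv_lt_one_of_one_lt₀ (one_lt_pow₀ hβ hn0)
  have hbranch : ∀ i s, invBranch β (w i) s = c i + ρ • s := fun i s => by
    rw [invBranch_eq_add_div β (w i) 0 s, hwlen, sub_zero, smul_eq_mul, div_eq_inv_mul]
  have hIcc : ∀ ω, homothetyCoding ρ c ω ∈ Icc l h :=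
    homothetyCoding_mem_of_mapsTo hρ0.le hρ1 isClosed_Icc (nonempty_Icc.2 hlh) fun i s hs => by
      simpa only [hbranch] using (hw i).mapsTo hs
  have hrec : ∀ ω, homothetyCoding ρ c ω =
      invBranch β (w (ω 0)) (homothetyCoding ρ c fun k => ω (k + 1)) := fun ω => by
    simp [hbranch, homothetyCoding_eq_sum_add hρ0.le hρ1 c ω 1]
  have hIco : ∀ ω, homothetyCoding ρ c ω ∈ Ico 0 1 := fun ω => by
    rw [hrec]
    exact Ico_subset_Ico_left ht
      ((hw _).suffix_mapsTo _ List.suffix_rfl (hw _).ne_nil (hIcc _))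
  have hsurvivor : range (homothetyCoding ρ c) ⊆ survivor β t := by
    refine subset_survivor_of_forall_exists_iterate_mem (range_subset_iff.2 hIco) ?_
    rintro _ ⟨ω, rfl⟩
    obtain ⟨hT, hle⟩ := (hw (ω 0)).iterate_Tbeta_invBranch (by positivity) ht (hIcc _) (hIco _)
    refine ⟨_, List.length_pos_iff.2 (hw (ω 0)).ne_nil, ?_, ?_⟩
    · rw [hrec, hT]
      exact mem_range_self _
    · rwa [hrec]
  have hpos := dimH_range_homothetyCoding_ne_zero (c := c) hρ0 hρ1 hne
  exact (pos_iff_ne_zero.2 hpos |>.trans_le (dimH_mono hsurvivor)).ne'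

theorem dimH_survivor_ne_zero_of_not_commute (hβ : 1 < β) (ht : 0 ≤ t) (hlh : l ≤ h)
    (hu : IsReturnWord β t l h u) (hv : IsReturnWord β t l h v)
    (hne : ¬ Function.Commute (invBranch β u) (invBranch β v)) : dimH (survivor β t) ≠ 0 := by
  -- `u ++ v` and `v ++ u` have the same length, so their branches have the same contraction ratio.
  have hlen : (u ++ v).length = (v ++ u).length := by simp [add_comm]
  refine dimH_survivor_ne_zero_of_length_eq hβ ht hlh (hu.append hv) (hv.append hu) hlen ?_
  contrapose! hne
  intro s
  rw [← invBranch_append, ← invBranch_append, invBranch_eq_add_div β (u ++ v) 0, hne, hlen,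
    ← invBranch_eq_add_div]

end InverseBranch

section GreedyExpansion

variable {β x y : ℝ}

lemma Tbeta_mem_Ico (β x : ℝ) : Tbeta β x ∈ Ico (0 : ℝ) 1 :=
  ⟨Int.fract_nonneg _, Int.fract_lt_one _⟩

lemma iterate_Tbeta_mem_Ico (β : ℝ) (hx : x ∈ Ico (0 : ℝ) 1) (n : ℕ) :
    (Tbeta β)^[n] x ∈ Ico (0 : ℝ) 1 :=
  MapsTo.iterate (fun y _ => Tbeta_mem_Ico β y) n hx

/-- The digits of the greedy `β`-expansion of `x`, indexed from `0`. -/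
noncomputable def greedyDigits (β x : ℝ) (k : ℕ) : ℕ := ⌊β * (Tbeta β)^[k] x⌋₊

/-- The word formed by the first `n` digits of the greedy `β`-expansion of `x`. -/
noncomputable def greedyWord (β x : ℝ) (n : ℕ) : List ℕ := (List.range n).map (greedyDigits β x)

lemma shiftn_greedyDigits (β x : ℝ) (n : ℕ) :
    shiftn n (greedyDigits β x) = greedyDigits β ((Tbeta β)^[n] x) := by
  ext k
  rw [shiftn, greedyDigits, greedyDigits, Function.iterate_add_apply]

lemma greedyDigits_le_floor (hβ : 0 ≤ β) (hx : x ∈ Ico (0 : ℝ) 1) (k : ℕ) :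
    greedyDigits β x k ≤ ⌊β⌋₊ :=
  Nat.floor_le_floor (mul_le_of_le_one_right hβ (iterate_Tbeta_mem_Ico β hx k).2.le)

lemma greedyDigits_add_iterate_succ (hβ : 0 ≤ β) (hx : x ∈ Ico (0 : ℝ) 1) (k : ℕ) :
    greedyDigits β x k + (Tbeta β)^[k + 1] x = β * (Tbeta β)^[k] x := by
  rw [greedyDigits, natCast_floor_eq_intCast_floor
    (mul_nonneg hβ (iterate_Tbeta_mem_Ico β hx k).1), Function.iterate_succ_apply', Tbeta]
  exact Int.floor_add_fract _

@[simp] lemma length_greedyWord (β x : ℝ) (n : ℕ) : (greedyWord β x n).length = n := by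
  simp [greedyWord]

lemma greedyWord_succ (β x : ℝ) (n : ℕ) :
    greedyWord β x (n + 1) = greedyDigits β x 0 :: greedyWord β (Tbeta β x) n := by
  rw [greedyWord, List.range_succ_eq_map, List.map_cons, List.map_map]
  rfl

lemma invBranch_greedyWord (hβ : 0 < β) (hx : x ∈ Ico (0 : ℝ) 1) (n : ℕ) :
    invBranch β (greedyWord β x n) ((Tbeta β)^[n] x) = x := by
  induction n generalizing x with
  | zero => rfl
  | succ n ih =>
    rw [greedyWord_succ, invBranch_cons, Function.iterate_succ_apply, ih (Tbeta_mem_Ico β x),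
      div_eq_iff hβ.ne', mul_comm]
    exact greedyDigits_add_iterate_succ hβ.le hx 0

lemma exists_eq_greedyWord_of_suffix {n : ℕ} {v : List ℕ} (hv : v <:+ greedyWord β x n)
    (hne : v ≠ []) : ∃ k m, 0 < m ∧ k + m = n ∧ v = greedyWord β ((Tbeta β)^[k] x) m := by
  induction n generalizing x with
  | zero => exact absurd (List.suffix_nil.1 hv) hne
  | succ n ih =>
    rw [greedyWord_succ, List.suffix_cons_iff, ← greedyWord_succ] at hv
    obtain rfl | hv := hv
    · exact ⟨0, n + 1, n.succ_pos, by omega, rfl⟩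
    · obtain ⟨k, m, hm, hkm, rfl⟩ := ih hv
      exact ⟨k + 1, m, hm, by omega, rfl⟩

lemma sub_eq_div_pow_of_greedyWord_eq (hβ : 0 < β) (hx : x ∈ Ico (0 : ℝ) 1)
    (hy : y ∈ Ico (0 : ℝ) 1) {n : ℕ} (h : greedyWord β x n = greedyWord β y n) :
    y - x = ((Tbeta β)^[n] y - (Tbeta β)^[n] x) / β ^ n := by
  have hxy := invBranch_eq_add_div β (greedyWord β x n) ((Tbeta β)^[n] x) ((Tbeta β)^[n] y)
  rw [invBranch_greedyWord hβ hx, h, invBranch_greedyWord hβ hy, length_greedyWord] at hxy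
  linarith

lemma sub_mem_Ioo_of_greedyDigits_lt (hβ : 0 < β) (hx : x ∈ Ico (0 : ℝ) 1)
    (hy : y ∈ Ico (0 : ℝ) 1) {n : ℕ} (h : greedyWord β x n = greedyWord β y n)
    (hlt : greedyDigits β x n < greedyDigits β y n) : y - x ∈ Ioo 0 (β⁻¹ ^ n) := by
  have hxy : (Tbeta β)^[n] x < (Tbeta β)^[n] y := by
    by_contra! hle
    exact hlt.not_ge (Nat.floor_le_floor (mul_le_mul_of_nonneg_left hle hβ.le))
  have hx0 := (iterate_Tbeta_mem_Ico β hx n).1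
  have hy1 := (iterate_Tbeta_mem_Ico β hy n).2
  rw [sub_eq_div_pow_of_greedyWord_eq hβ hx hy h, div_eq_mul_inv, inv_pow]
  exact ⟨mul_pos (by linarith) (by positivity),
    mul_lt_of_lt_one_left (by positivity) (by linarith)⟩

lemma hasSum_greedyDigits (hβ : 1 < β) (hx : x ∈ Ico (0 : ℝ) 1) :
    HasSum (fun k => (greedyDigits β x k : ℝ) / β ^ (k + 1)) x := by
  have hpartial : ∀ n, ∑ k ∈ Finset.range n, (greedyDigits β x k : ℝ) / β ^ (k + 1) =
      x - (Tbeta β)^[n] x * β⁻¹ ^ n := by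
    intro n
    induction n with
    | zero => simp
    | succ n ih =>
      have hdigit := greedyDigits_add_iterate_succ (zero_le_one.trans hβ.le) hx n
      rw [Finset.sum_range_succ, ih, eq_sub_of_add_eq hdigit, inv_pow, inv_pow]
      field_simp
      ring
  have hzero : Tendsto (fun n => (Tbeta β)^[n] x * β⁻¹ ^ n) atTop (𝓝 0) := by
    have hpow := tendsto_pow_atTop_nhds_zero_of_lt_one (r := β⁻¹) (by positivity)
      (inv_lt_one_of_one_lt₀ hβ)
    exact squeeze_zero (fun n => mul_nonneg (iterate_Tbeta_mem_Ico β hx n).1 (by positivity))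
      (fun n => mul_le_of_le_one_left (by positivity) (iterate_Tbeta_mem_Ico β hx n).2.le) hpow
  rw [hasSum_iff_tendsto_nat_of_nonneg fun k => by positivity]
  simpa only [hpartial, sub_zero] using hzero.const_sub x

lemma valSeq_greedyDigits (hβ : 1 < β) (hx : x ∈ Ico (0 : ℝ) 1) :
    valSeq β (greedyDigits β x) = x := (hasSum_greedyDigits hβ hx).tsum_eq

lemma injective_shiftn_greedyDigits (hβ : 1 < β) (hx : x ∈ Ico (0 : ℝ) 1)
    (hinj : Function.Injective fun n => (Tbeta β)^[n] x) :
    Function.Injective fun n => shiftn n (greedyDigits β x) := by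
  intro m n hmn
  simp only [shiftn_greedyDigits] at hmn
  apply hinj
  dsimp only
  rw [← valSeq_greedyDigits hβ (iterate_Tbeta_mem_Ico β hx m), hmn,
    valSeq_greedyDigits hβ (iterate_Tbeta_mem_Ico β hx n)]

lemma eq_of_greedyWord_eq_of_iterate_eq {m n : ℕ} (hβ : 1 < β) (hx : x ∈ Ico (0 : ℝ) 1)
    (hy : y ∈ Ico (0 : ℝ) 1) (hmn : m < n) (hword : greedyWord β x n = greedyWord β y n)
    (hxmn : (Tbeta β)^[m] x = (Tbeta β)^[n] x) (hymn : (Tbeta β)^[m] y = (Tbeta β)^[n] y) :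
    x = y := by
  have hword' : greedyWord β x m = greedyWord β y m := by
    have htake := congrArg (List.take m) hword
    simpa [greedyWord, ← List.map_take, List.take_range, hmn.le] using htake
  have hβ0 : 0 < β := by linarith
  have hm := sub_eq_div_pow_of_greedyWord_eq hβ0 hx hy hword'
  have hn := sub_eq_div_pow_of_greedyWord_eq hβ0 hx hy hword
  rw [← hxmn, ← hymn] at hn
  rw [eq_div_iff (by positivity)] at hm hn
  have hzero : (y - x) * (β ^ n - β ^ m) = 0 := by linarith
  have hpow : β ^ m < β ^ n := pow_lt_pow_right₀ hβ hmn
  rcases mul_eq_zero.1 hzero with h | h <;> linarith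

lemma countable_setOf_not_injective_orbit (hβ : 1 < β) :
    {x | x ∈ Ico (0 : ℝ) 1 ∧ ¬ Function.Injective fun n => (Tbeta β)^[n] x}.Countable := by
  have hsub : {x | x ∈ Ico (0 : ℝ) 1 ∧ ¬ Function.Injective fun n => (Tbeta β)^[n] x} ⊆
      ⋃ (m : ℕ) (n : ℕ) (w : List ℕ), {x | x ∈ Ico (0 : ℝ) 1 ∧ m < n ∧
        greedyWord β x n = w ∧ (Tbeta β)^[m] x = (Tbeta β)^[n] x} := by
    rintro x ⟨hx, hinj⟩
    obtain ⟨m, n, hne, heq⟩ : ∃ m n, m ≠ n ∧ (Tbeta β)^[m] x = (Tbeta β)^[n] x := by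
      simpa [Function.Injective, and_comm] using hinj
    simp only [mem_iUnion]
    rcases hne.lt_or_gt with h | h
    · exact ⟨m, n, _, hx, h, rfl, heq⟩
    · exact ⟨n, m, _, hx, h, rfl, heq.symm⟩
  refine Countable.mono hsub (countable_iUnion fun m => countable_iUnion fun n =>
    countable_iUnion fun w => Subsingleton.countable ?_)
  rintro x ⟨hx, hmn, hxw, hxT⟩ y ⟨hy, -, hyw, hyT⟩
  exact eq_of_greedyWord_eq_of_iterate_eq hβ hx hy hmn (hxw.trans hyw.symm) hxT hyT

end GreedyExpansion

section Recurrence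

lemma not_injective_shift_of_eventually_eq {α : Type*} [Finite α] {d : ℕ → α} {N : ℕ}
    (f : (Fin N → α) → α) (h : ∀ᶠ n in atTop, d (n + N) = f fun i => d (n + i)) :
    ¬ Function.Injective fun n k => d (n + k) := by
  obtain ⟨K, hK⟩ := eventually_atTop.1 h
  obtain ⟨p, q, hpq, hblock⟩ :=
    Finite.exists_ne_map_eq_of_infinite fun n => fun i : Fin N => d (K + n + i)
  have htail : ∀ k, d (K + p + k) = d (K + q + k) := by
    intro k
    induction k using Nat.strong_induction_on with
    | _ k ih =>
      obtain hk | hk := lt_or_ge k N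
      · exact congrFun hblock ⟨k, hk⟩
      · obtain ⟨r, rfl⟩ := Nat.exists_eq_add_of_le' hk
        rw [← add_assoc, ← add_assoc, hK _ (by omega), hK _ (by omega)]
        congr 1
        ext i
        rw [add_assoc, add_assoc (K + q)]
        exact ih _ (by omega)
  intro hinj
  have := @hinj (K + p) (K + q) (funext htail)
  omega

lemma not_injective_shift_of_eventually_le {α : Type*} [Finite α] [LinearOrder α] {d : ℕ → α}
    {N : ℕ} (h : ∀ m, ∀ᶠ n in atTop, (∀ i < N, d (n + i) = d (m + i)) → d (n + N) ≤ d (m + N)) :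
    ¬ Function.Injective fun n k => d (n + k) := by
  -- A late block is followed by the least letter that ever follows it, hence determines it.
  let block (n : ℕ) : Fin N → α := fun i => d (n + i)
  have hdet : ∀ c, ∃ a, ∀ᶠ n in atTop, block n = c → d (n + N) = a := by
    intro c
    rcases {n | block n = c}.eq_empty_or_nonempty with hempty | hne
    · exact ⟨d 0, .of_forall fun n hn => absurd hn (eq_empty_iff_forall_notMem.1 hempty n)⟩
    · obtain ⟨m, hm, hmin⟩ :=
        exists_minimalFor_of_wellFoundedLT (· ∈ {n | block n = c}) (fun n => d (n + N)) hne
      refine ⟨d (m + N), (h m).mono fun n hn hnc => ?_⟩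
      have hle := hn fun i hi => congrFun (hnc.trans hm.symm) ⟨i, hi⟩
      exact hle.antisymm (hmin hnc hle)
  choose f hf using hdet
  exact not_injective_shift_of_eventually_eq f
    ((eventually_all.2 hf).mono fun n hn => hn (block n) rfl)

variable {β x ε t : ℝ}

lemma exists_frequently_iterate_mem_Ioo (hβ : 1 < β) (hx : x ∈ Ico (0 : ℝ) 1)
    (hinj : Function.Injective fun n => (Tbeta β)^[n] x) (hε : 0 < ε) :
    ∃ m, ∃ᶠ n in atTop, (Tbeta β)^[n] x ∈ Ioo ((Tbeta β)^[m] x) ((Tbeta β)^[m] x + ε) := by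
  by_contra! hcon
  obtain ⟨N, hN⟩ : ∃ N : ℕ, β⁻¹ ^ N < ε :=
    exists_pow_lt_of_lt_one hε (inv_lt_one_of_one_lt₀ hβ)
  have hβ0 : 0 < β := by linarith
  let d : ℕ → Fin (⌊β⌋₊ + 1) := fun k =>
    ⟨greedyDigits β x k, Nat.lt_succ_of_le (greedyDigits_le_floor hβ0.le hx k)⟩
  have hd : ∀ n k, (d (n + k) : ℕ) = greedyDigits β ((Tbeta β)^[n] x) k := fun n k => by
    rw [← shiftn_greedyDigits]
    exact congrArg (greedyDigits β x) (add_comm n k)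
  refine not_injective_shift_of_eventually_le (d := d) (N := N) (fun m => ?_) fun m n hmn => ?_
  · filter_upwards [hcon m] with n hn hblock
    by_contra! hlt
    have hword : greedyWord β ((Tbeta β)^[m] x) N = greedyWord β ((Tbeta β)^[n] x) N :=
      List.map_congr_left fun i hi => by
        rw [← hd, ← hd, hblock i (List.mem_range.1 hi)]
    rw [Fin.lt_def, hd, hd] at hlt
    have hsub := sub_mem_Ioo_of_greedyDigits_lt hβ0 (iterate_Tbeta_mem_Ico β hx m)
      (iterate_Tbeta_mem_Ico β hx n) hword hlt
    exact hn ⟨by linarith [hsub.1], by linarith [hsub.2]⟩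
  · refine injective_shiftn_greedyDigits hβ hx hinj (funext fun k => ?_)
    have := congrArg Fin.val (congrFun hmn k)
    rwa [hd, hd, ← shiftn_greedyDigits, ← shiftn_greedyDigits] at this

lemma iterate_Tbeta_mem_survivor (hx : x ∈ survivor β t) (n : ℕ) :
    (Tbeta β)^[n] x ∈ survivor β t :=
  ⟨iterate_Tbeta_mem_Ico β hx.1 n, fun k => by
    rw [← Function.iterate_add_apply]
    exact hx.2 _⟩

lemma exists_mem_survivor_frequently_iterate_mem_Ioo (hβ : 1 < β) (hx : x ∈ survivor β t)
    (hinj : Function.Injective fun n => (Tbeta β)^[n] x) (hε : 0 < ε) :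
    ∃ ξ ∈ survivor β t, ∃ᶠ n in atTop, (Tbeta β)^[n] ξ ∈ Ioo ξ (ξ + ε) := by
  obtain ⟨m, hm⟩ := exists_frequently_iterate_mem_Ioo hβ hx.1 hinj hε
  have hshift : ∃ᶠ n in atTop,
      (Tbeta β)^[n - m] ((Tbeta β)^[m] x) ∈ Ioo ((Tbeta β)^[m] x) ((Tbeta β)^[m] x + ε) :=
    (hm.and_eventually (eventually_ge_atTop m)).mono fun n hn => by
      rw [← Function.iterate_add_apply, Nat.sub_add_cancel hn.2]
      exact hn.1
  exact ⟨_, iterate_Tbeta_mem_survivor hx m, (tendsto_sub_atTop_nat m).frequently hshift⟩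

end Recurrence

section LowerSemicontinuity

variable {β t t' δ ξ x : ℝ}

lemma survivor_anti (β : ℝ) (h : t' ≤ t) : survivor β t ⊆ survivor β t' :=
  fun _ hx => ⟨hx.1, fun n => h.trans (hx.2 n)⟩

lemma survivor_eq_empty_of_one_le (β : ℝ) (ht : 1 ≤ t) : survivor β t = ∅ :=
  eq_empty_of_forall_notMem fun _ hx => (ht.trans (hx.2 0)).not_gt hx.1.2

lemma tau_le_of_dimH_eq_zero (ht : 0 < t) (h : dimH (survivor β t) = 0) : tau β ≤ t :=
  csInf_le ⟨0, fun _ hs => hs.1.le⟩ ⟨ht, h⟩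

lemma le_tau_of_dimH_ne_zero (h : dimH (survivor β t) ≠ 0) : t ≤ tau β := by
  refine le_csInf ⟨1, one_pos, ?_⟩ fun s hs => ?_
  · rw [survivor_eq_empty_of_one_le β le_rfl, dimH_empty]
  · by_contra! hst
    exact h (le_antisymm ((dimH_mono (survivor_anti β hst.le)).trans hs.2.le) zero_le)

lemma tau_nonneg (β : ℝ) : 0 ≤ tau β := Real.sInf_nonneg fun _ hs => hs.1.le

lemma tau_le_of_forall_not_injective_orbit (hβ : 1 < β) (ht : 0 < t)
    (h : ∀ x ∈ survivor β t, ¬ Function.Injective fun n => (Tbeta β)^[n] x) : tau β ≤ t := by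
  refine tau_le_of_dimH_eq_zero ht (dimH_countable ?_)
  refine (countable_setOf_not_injective_orbit hβ).mono fun x hx => ?_
  exact ⟨hx.1, h x hx⟩

lemma exists_mem_survivor_injective_orbit_of_lt_tau (hβ : 1 < β) (ht : 0 < t) (h : t < tau β) :
    ∃ x ∈ survivor β t, Function.Injective fun n => (Tbeta β)^[n] x := by
  contrapose! h
  exact tau_le_of_forall_not_injective_orbit hβ ht h

lemma invBranch_greedyWord_eq (hβ : 0 < β) (hx : x ∈ Ico (0 : ℝ) 1) (n : ℕ) (s : ℝ) :
    invBranch β (greedyWord β x n) s = x + (s - (Tbeta β)^[n] x) / β ^ n := by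
  rw [invBranch_eq_add_div β _ ((Tbeta β)^[n] x) s, invBranch_greedyWord hβ hx, length_greedyWord]

lemma eventually_isReturnWord_greedyWord {n : ℕ} (hβ : 1 < β) (hδ : 0 < δ) (hξ : ξ ∈ survivor β t)
    (hn : 0 < n) (hret : (Tbeta β)^[n] ξ ∈ Ioo ξ (ξ + δ * (β - 1))) :
    ∀ᶠ b in 𝓝 β, IsReturnWord b (t - δ) (ξ - δ) ξ (greedyWord β ξ n) := by
  have hβ0 : 0 < β := by linarith
  have hdrop : ∀ m, 0 < m → -δ < (ξ - δ - (Tbeta β)^[n] ξ) / β ^ m := fun m hm => by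
    have hβm : β ≤ β ^ m := le_self_pow₀ hβ.le hm.ne'
    rw [lt_div_iff₀ (by positivity)]
    nlinarith [hret.2]
  have hneg : ∀ m, (ξ - (Tbeta β)^[n] ξ) / β ^ m < 0 := fun m =>
    div_neg_of_neg_of_pos (sub_neg.2 hret.1) (by positivity)
  have hword : greedyWord β ξ n ≠ [] := List.length_pos_iff.1 (by simpa using hn)
  refine IsReturnWord.eventually_of_endpoints hβ0 hword ?_ ?_ fun v hv hne => ?_
  · rw [invBranch_greedyWord_eq hβ0 hξ.1]
    linarith [hdrop n hn]
  · rw [invBranch_greedyWord_eq hβ0 hξ.1]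
    linarith [hneg n]
  · obtain ⟨k, m, hm, hkm, rfl⟩ := exists_eq_greedyWord_of_suffix hv hne
    have hiter : (Tbeta β)^[m] ((Tbeta β)^[k] ξ) = (Tbeta β)^[n] ξ := by
      rw [← Function.iterate_add_apply, add_comm, hkm]
    have hk := iterate_Tbeta_mem_Ico β hξ.1 k
    rw [invBranch_greedyWord_eq hβ0 hk, invBranch_greedyWord_eq hβ0 hk, hiter]
    exact ⟨by linarith [hdrop m hm, hξ.2 k], by linarith [hneg m, hk.2]⟩

lemma eventually_not_commute_invBranch {u v : List ℕ} (hβ : β ≠ 0)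
    (h : ¬ Function.Commute (invBranch β u) (invBranch β v)) :
    ∀ᶠ b in 𝓝 β, ¬ Function.Commute (invBranch b u) (invBranch b v) := by
  obtain ⟨s, hs⟩ := not_forall.1 h
  rw [← invBranch_append, ← invBranch_append] at hs
  filter_upwards [((continuousAt_invBranch hβ (u ++ v) s).ne_iff_eventually_ne
    (continuousAt_invBranch hβ (v ++ u) s)).1 hs] with b hb hcomm
  rw [invBranch_append, invBranch_append] at hb
  exact hb (hcomm s)

lemma not_commute_invBranch_greedyWord {m n : ℕ} (hβ : 0 < β) (hx : x ∈ Ico (0 : ℝ) 1)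
    (hne : ((Tbeta β)^[m] x - x) * (β ^ n - 1) ≠ ((Tbeta β)^[n] x - x) * (β ^ m - 1)) :
    ¬ Function.Commute (invBranch β (greedyWord β x m)) (invBranch β (greedyWord β x n)) := by
  intro hcomm
  have hx0 := hcomm x
  simp only [invBranch_greedyWord_eq hβ hx] at hx0
  field_simp at hx0
  exact hne (by linarith)

lemma exists_eventually_isReturnWord_not_commute (hβ : 1 < β) (hδ : 0 < δ) (hx : x ∈ survivor β t)
    (hinj : Function.Injective fun n => (Tbeta β)^[n] x) :
    ∃ ξ u v, ∀ᶠ b in 𝓝 β, IsReturnWord b (t - δ) (ξ - δ) ξ u ∧ IsReturnWord b (t - δ) (ξ - δ) ξ v ∧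
      ¬ Function.Commute (invBranch b u) (invBranch b v) := by
  -- The fixed point of the branch of an `n`-step return lies `(T^n ξ - ξ) / (β ^ n - 1)` below `ξ`.
  -- This tends to `0` along the returns, so a late return does not share the fixed point of `m`.
  have hβ0 : 0 < β := by linarith
  set ε := δ * (β - 1)
  have hε : 0 < ε := mul_pos hδ (by linarith)
  obtain ⟨ξ, hξ, hfreq⟩ := exists_mem_survivor_frequently_iterate_mem_Ioo hβ hx hinj hε
  obtain ⟨m, hm, hm0⟩ := (hfreq.and_eventually (eventually_gt_atTop 0)).exists
  have hpos : 0 < (Tbeta β)^[m] ξ - ξ := sub_pos.2 hm.1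
  have hlarge := (tendsto_pow_atTop_atTop_of_one_lt hβ).eventually_gt_atTop
    (1 + ε * (β ^ m - 1) / ((Tbeta β)^[m] ξ - ξ))
  obtain ⟨n, ⟨hn, hn0⟩, hlarge⟩ :=
    ((hfreq.and_eventually (eventually_gt_atTop 0)).and_eventually hlarge).exists
  have hne : ((Tbeta β)^[n] ξ - ξ) * (β ^ m - 1) < ((Tbeta β)^[m] ξ - ξ) * (β ^ n - 1) := by
    have hβm : 0 < β ^ m - 1 := sub_pos.2 (one_lt_pow₀ hβ hm0.ne')
    calc ((Tbeta β)^[n] ξ - ξ) * (β ^ m - 1) < ε * (β ^ m - 1) :=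
        mul_lt_mul_of_pos_right (by linarith [hn.2]) hβm
      _ < ((Tbeta β)^[m] ξ - ξ) * (β ^ n - 1) := by
        rw [mul_comm ((Tbeta β)^[m] ξ - ξ), ← div_lt_iff₀ hpos]
        linarith
  exact ⟨ξ, _, _, (eventually_isReturnWord_greedyWord hβ hδ hξ hm0 hm).and <|
    (eventually_isReturnWord_greedyWord hβ hδ hξ hn0 hn).and <|
      eventually_not_commute_invBranch hβ0.ne' (not_commute_invBranch_greedyWord hβ0 hξ.1 hne.ne')⟩

theorem eventually_le_tau_of_mem_survivor (hβ : 1 < β) (ht' : 0 ≤ t') (htt' : t' < t)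
    (hx : x ∈ survivor β t) (hinj : Function.Injective fun n => (Tbeta β)^[n] x) :
    ∀ᶠ b in 𝓝 β, t' ≤ tau b := by
  obtain ⟨ξ, u, v, huv⟩ :=
    exists_eventually_isReturnWord_not_commute hβ (sub_pos.2 htt') hx hinj
  filter_upwards [huv, eventually_gt_nhds hβ] with b ⟨hu, hv, hne⟩ hb
  rw [sub_sub_cancel] at hu hv
  exact le_tau_of_dimH_ne_zero
    (dimH_survivor_ne_zero_of_not_commute hb ht' (by linarith) hu hv hne)

lemma le_tau_of_mem_survivor_of_injective_orbit (hβ : 1 < β) (hx : x ∈ survivor β t)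
    (hinj : Function.Injective fun n => (Tbeta β)^[n] x) : t ≤ tau β := by
  refine le_of_forall_lt_imp_le_of_dense fun t' ht' => ?_
  rcases lt_or_ge t' 0 with h0 | h0
  · exact h0.le.trans (tau_nonneg β)
  · exact (eventually_le_tau_of_mem_survivor hβ h0 ht' hx hinj).self_of_nhds

theorem lowerSemicontinuousAt_tau (hβ : 1 < β) : LowerSemicontinuousAt tau β := by
  intro s hs
  rcases lt_or_ge s 0 with hs0 | hs0
  · exact .of_forall fun b => hs0.trans_le (tau_nonneg b)
  obtain ⟨t, hst, ht⟩ := exists_between hs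
  obtain ⟨t', hst', htt'⟩ := exists_between hst
  obtain ⟨x, hx, hinj⟩ := exists_mem_survivor_injective_orbit_of_lt_tau hβ (by linarith) ht
  exact (eventually_le_tau_of_mem_survivor hβ (by linarith) htt' hx hinj).mono
    fun b hb => hst'.trans_le hb

end LowerSemicontinuity

section ChangeOfBase

variable {a b t x : ℝ} {c d : ℕ → ℕ}

lemma shiftn_shiftn (m n : ℕ) (d : ℕ → ℕ) : shiftn m (shiftn n d) = shiftn (m + n) d :=
  funext fun i => congrArg d (add_assoc i m n)

lemma bddAbove_range_shiftn (hd : BddAbove (range d)) (k : ℕ) : BddAbove (range (shiftn k d)) :=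
  hd.mono (range_comp_subset_range (· + k) d)

lemma summable_div_pow_of_bddAbove (hb : 1 < b) (hd : BddAbove (range d)) :
    Summable fun i => (d i : ℝ) / b ^ (i + 1) := by
  obtain ⟨M, hM⟩ := hd
  have hgeom : Summable fun i : ℕ => (M : ℝ) * b⁻¹ ^ (i + 1) :=
    ((summable_nat_add_iff 1).2
      (summable_geometric_of_lt_one (by positivity) (inv_lt_one_of_one_lt₀ hb))).mul_left _
  refine hgeom.of_nonneg_of_le (fun i => by positivity) fun i => ?_
  rw [inv_pow, ← div_eq_mul_inv]
  gcongr
  exact hM (mem_range_self i)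

lemma valSeq_nonneg (hb : 0 ≤ b) (d : ℕ → ℕ) : 0 ≤ valSeq b d :=
  tsum_nonneg fun _ => by positivity

lemma mul_valSeq (hb : 1 < b) (hd : BddAbove (range d)) :
    b * valSeq b d = d 0 + valSeq b (shiftn 1 d) := by
  have hb0 : b ≠ 0 := by positivity
  rw [valSeq, (summable_div_pow_of_bddAbove hb hd).tsum_eq_zero_add, mul_add, valSeq,
    ← tsum_mul_left, zero_add, pow_one, mul_div_cancel₀ _ hb0]
  refine congrArg _ (tsum_congr fun i => ?_)
  rw [shiftn, pow_succ b (i + 1)]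
  field_simp

lemma mul_valSeq_shiftn (hb : 1 < b) (hd : BddAbove (range d)) (k : ℕ) :
    b * valSeq b (shiftn k d) = d k + valSeq b (shiftn (k + 1) d) := by
  rw [mul_valSeq hb (bddAbove_range_shiftn hd k), shiftn_shiftn, add_comm 1, shiftn, zero_add]

lemma valSeq_mono (hb : 1 < b) (hd : BddAbove (range d)) (hcd : c ≤ d) :
    valSeq b c ≤ valSeq b d := by
  have hc : BddAbove (range c) := BddAbove.range_mono d hcd hd
  refine (summable_div_pow_of_bddAbove hb hc).tsum_le_tsum (fun i => ?_)
    (summable_div_pow_of_bddAbove hb hd)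
  gcongr
  exact hcd i

lemma valSeq_anti (ha : 1 < a) (hab : a ≤ b) (hd : BddAbove (range d)) :
    valSeq b d ≤ valSeq a d := by
  refine (summable_div_pow_of_bddAbove (ha.trans_le hab) hd).tsum_le_tsum (fun i => ?_)
    (summable_div_pow_of_bddAbove ha hd)
  gcongr

lemma valSeq_const (hb : 1 < b) (k : ℕ) : valSeq b (fun _ => k) = k / (b - 1) := by
  have hrec : b * valSeq b (fun _ => k) = k + valSeq b (fun _ => k) :=
    mul_valSeq hb (d := fun _ => k) ⟨k, by simp [upperBounds]⟩
  rw [eq_div_iff (by linarith)]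
  linarith

lemma iterate_Tbeta_valSeq (hb : 1 < b) (hd : BddAbove (range d))
    (hlt : ∀ k, valSeq b (shiftn k d) < 1) (n : ℕ) :
    (Tbeta b)^[n] (valSeq b d) = valSeq b (shiftn n d) := by
  induction n with
  | zero => rfl
  | succ n ih =>
    rw [Function.iterate_succ_apply', ih, Tbeta, mul_valSeq_shiftn hb hd, Int.fract_natCast_add]
    exact Int.fract_eq_self.2 ⟨valSeq_nonneg (by positivity) _, hlt _⟩

lemma greedyDigits_valSeq (hb : 1 < b) (hd : BddAbove (range d))
    (hlt : ∀ k, valSeq b (shiftn k d) < 1) : greedyDigits b (valSeq b d) = d := by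
  ext n
  have hnonneg := valSeq_nonneg (by positivity : 0 ≤ b) (shiftn (n + 1) d)
  rw [greedyDigits, iterate_Tbeta_valSeq hb hd hlt, mul_valSeq_shiftn hb hd,
    add_comm, Nat.floor_add_natCast hnonneg, Nat.floor_eq_zero.2 (hlt _), zero_add]

lemma le_div_sub_one_of_mul_le_add_succ {f : ℕ → ℝ} {r : ℝ} (hb : 1 < b)
    (hf : BddAbove (range f)) (h : ∀ k, b * f k ≤ r + f (k + 1)) (k : ℕ) : f k ≤ r / (b - 1) := by
  have hb0 : 0 < b := by linarith
  have hsup : ⨆ k, f k ≤ (r + ⨆ k, f k) / b := ciSup_le fun k => by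
    rw [le_div_iff₀' hb0]
    linarith [h k, le_ciSup hf (k + 1)]
  rw [le_div_iff₀ hb0] at hsup
  refine (le_ciSup hf k).trans ?_
  rw [le_div_iff₀ (by linarith)]
  linarith

lemma valSeq_sub_valSeq_le (ha : 1 < a) (hab : a ≤ b) (hd : BddAbove (range d))
    (hle : ∀ k, valSeq a (shiftn k d) ≤ 1) :
    valSeq a d - valSeq b d ≤ (b - a) / (b - 1) := by
  have hb : 1 < b := ha.trans_le hab
  refine le_div_sub_one_of_mul_le_add_succ (f := fun k =>
    valSeq a (shiftn k d) - valSeq b (shiftn k d)) hb ⟨1, ?_⟩ (fun k => ?_) 0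
  · rintro _ ⟨k, rfl⟩
    exact (sub_le_self _ (valSeq_nonneg (by positivity) _)).trans (hle k)
  · calc b * (valSeq a (shiftn k d) - valSeq b (shiftn k d))
        = (b - a) * valSeq a (shiftn k d) +
            (a * valSeq a (shiftn k d) - b * valSeq b (shiftn k d)) := by ring
      _ ≤ (b - a) * 1 + (a * valSeq a (shiftn k d) - b * valSeq b (shiftn k d)) := by
        have hstep := mul_le_mul_of_nonneg_left (hle k) (sub_nonneg.2 hab)
        linarith
      _ = (b - a) + (valSeq a (shiftn (k + 1) d) - valSeq b (shiftn (k + 1) d)) := by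
        rw [mul_valSeq_shiftn ha hd, mul_valSeq_shiftn hb hd]
        ring

lemma bddAbove_range_greedyDigits (ha : 0 ≤ a) (hx : x ∈ Ico (0 : ℝ) 1) :
    BddAbove (range (greedyDigits a x)) :=
  ⟨⌊a⌋₊, forall_mem_range.2 (greedyDigits_le_floor ha hx)⟩

lemma exists_mem_survivor_injective_orbit_of_le (ha : 1 < a) (hab : a ≤ b)
    (hx : x ∈ survivor a t) (hinj : Function.Injective fun n => (Tbeta a)^[n] x) :
    ∃ y ∈ survivor b (t - (b - a) / (b - 1)), Function.Injective fun n => (Tbeta b)^[n] y := by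
  have hb : 1 < b := ha.trans_le hab
  set d := greedyDigits a x
  have hd : BddAbove (range d) := bddAbove_range_greedyDigits (by positivity) hx.1
  have hval : ∀ k, valSeq a (shiftn k d) = (Tbeta a)^[k] x := fun k => by
    rw [shiftn_greedyDigits, valSeq_greedyDigits ha (iterate_Tbeta_mem_Ico a hx.1 k)]
  have hlt : ∀ k, valSeq a (shiftn k d) < 1 := fun k => by
    rw [hval]
    exact (iterate_Tbeta_mem_Ico a hx.1 k).2
  have hlt' : ∀ k, valSeq b (shiftn k d) < 1 := fun k =>
    (valSeq_anti ha hab (bddAbove_range_shiftn hd k)).trans_lt (hlt k)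
  refine ⟨valSeq b d, ⟨⟨valSeq_nonneg (by positivity) d, hlt' 0⟩, fun n => ?_⟩, fun m n hmn => ?_⟩
  · have hsub := valSeq_sub_valSeq_le ha hab (bddAbove_range_shiftn hd n) fun k => by
      rw [shiftn_shiftn]
      exact (hlt _).le
    rw [iterate_Tbeta_valSeq hb hd hlt']
    linarith [hx.2 n, hval n]
  · refine injective_shiftn_greedyDigits ha hx.1 hinj ?_
    have hshift := congrArg (greedyDigits b) hmn
    simpa only [← shiftn_greedyDigits, greedyDigits_valSeq hb hd hlt'] using hshift

theorem tau_le_tau_add_div (ha : 1 < a) (hab : a ≤ b) : tau a ≤ tau b + (b - a) / (b - 1) := by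
  have hb : 1 < b := ha.trans_le hab
  have hδ : 0 ≤ (b - a) / (b - 1) := div_nonneg (by linarith) (by linarith)
  by_contra! hlt
  obtain ⟨t, ht, hta⟩ := exists_between hlt
  obtain ⟨x, hx, hinj⟩ :=
    exists_mem_survivor_injective_orbit_of_lt_tau ha (by linarith [tau_nonneg b]) hta
  obtain ⟨y, hy, hyinj⟩ := exists_mem_survivor_injective_orbit_of_le ha hab hx hinj
  refine (?_ : t - (b - a) / (b - 1) ≤ tau b).not_gt (by linarith)
  exact le_tau_of_mem_survivor_of_injective_orbit hb hy hyinj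

theorem monotoneOn_tau_add_log : MonotoneOn (fun b => tau b + Real.log (b - 1)) (Ioi 1) := by
  intro a ha b _ hab
  have ha' : 0 < a - 1 := sub_pos.2 ha
  have hb' : 0 < b - 1 := by linarith
  calc tau a + Real.log (a - 1)
      ≤ tau b + (1 - ((b - 1) / (a - 1))⁻¹) + Real.log (a - 1) := by
        have hdiv : (b - a) / (b - 1) = 1 - ((b - 1) / (a - 1))⁻¹ := by
          field_simp
          ring
        rw [← hdiv]
        gcongr
        exact tau_le_tau_add_div ha hab
    _ ≤ tau b + Real.log ((b - 1) / (a - 1)) + Real.log (a - 1) := by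
        gcongr
        exact Real.one_sub_inv_le_log_of_pos (by positivity)
    _ = tau b + Real.log (b - 1) := by
        rw [Real.log_div hb'.ne' ha'.ne']
        ring

end ChangeOfBase

section OneSidedLimits

variable {β : ℝ}

lemma continuousAt_log_sub_one (hβ : 1 < β) : ContinuousAt (fun b => Real.log (b - 1)) β :=
  (continuousAt_id.sub continuousAt_const).log (sub_pos.2 hβ).ne'

theorem tendsto_tau_nhdsLT (hβ : 1 < β) : Tendsto tau (𝓝[<] β) (𝓝 (tau β)) := by
  refine tendsto_order.2 ⟨fun s hs => nhdsWithin_le_nhds (lowerSemicontinuousAt_tau hβ s hs),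
    fun s hs => ?_⟩
  have hlog : ∀ᶠ b in 𝓝 β, Real.log (β - 1) - (s - tau β) < Real.log (b - 1) :=
    (continuousAt_log_sub_one hβ).eventually_const_lt (by linarith)
  filter_upwards [nhdsWithin_le_nhds hlog, nhdsWithin_le_nhds (eventually_gt_nhds hβ),
    self_mem_nhdsWithin] with b hb hb1 hbβ
  have hmono : tau b + Real.log (b - 1) ≤ tau β + Real.log (β - 1) :=
    monotoneOn_tau_add_log hb1 hβ (le_of_lt hbβ)
  linarith

theorem exists_tendsto_tau_nhdsGT (hβ : 1 < β) : ∃ l, Tendsto tau (𝓝[>] β) (𝓝 l) := by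
  have hmono : MonotoneOn (fun b => tau b + Real.log (b - 1)) (Ioi β) :=
    monotoneOn_tau_add_log.mono (Ioi_subset_Ioi hβ.le)
  have hbdd : BddBelow ((fun b => tau b + Real.log (b - 1)) '' Ioi β) :=
    ⟨tau β + Real.log (β - 1), forall_mem_image.2 fun b hb =>
      monotoneOn_tau_add_log hβ (hβ.trans hb) (le_of_lt hb)⟩
  have hlog := (continuousAt_log_sub_one hβ).continuousWithinAt (s := Ioi β)
  refine ⟨_, ((hmono.tendsto_nhdsGT hbdd).sub hlog.tendsto).congr fun b => ?_⟩
  exact add_sub_cancel_right _ _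

theorem countable_not_continuousWithinAt_tau :
    {β : ℝ | 1 < β ∧ ¬ ContinuousWithinAt tau (Ioi 1) β}.Countable := by
  refine monotoneOn_tau_add_log.countable_not_continuousWithinAt.mono ?_
  rintro β ⟨hβ, hc⟩
  refine ⟨hβ, fun h => hc ?_⟩
  exact (h.sub (continuousAt_log_sub_one hβ).continuousWithinAt).congr
    (fun b _ => (add_sub_cancel_right _ _).symm) (add_sub_cancel_right _ _).symm

end OneSidedLimits

section Jumps

variable {β t l h : ℝ} {k n : ℕ}

theorem tau_le_div_of_div_add_inv_eq_one (hk : k ≠ 0) (hβ : 1 < β)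
    (hroot : k / (β - 1) + β⁻¹ = 1) : tau β ≤ k / β := by
  have hβ0 : 0 < β := by linarith
  refine tau_le_of_forall_not_injective_orbit hβ (by positivity) fun x hx hinj => ?_
  set d := greedyDigits β x
  have hd : BddAbove (range d) := bddAbove_range_greedyDigits hβ0.le hx.1
  have hdigit := greedyDigits_add_iterate_succ hβ0.le hx.1
  have hge : ∀ n, k ≤ d n := fun n => Nat.le_floor ((div_le_iff₀' hβ0).1 (hx.2 n))
  have hlow : ∀ n, k / (β - 1) ≤ (Tbeta β)^[n] x := fun n => by
    rw [← valSeq_const hβ, ← valSeq_greedyDigits hβ (iterate_Tbeta_mem_Ico β hx.1 n),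
      ← shiftn_greedyDigits]
    exact valSeq_mono hβ (bddAbove_range_shiftn hd n) fun i => hge (i + n)
  have hle : ∀ n, d n ≤ k := fun n => by
    by_contra! hlt
    have hcast : (k : ℝ) + 1 ≤ d n := by exact_mod_cast hlt
    have hβk : k + 1 + k / (β - 1) = β := by
      have : β - 1 ≠ 0 := by linarith
      field_simp at hroot ⊢
      linarith
    have hT1 := (iterate_Tbeta_mem_Ico β hx.1 n).2
    nlinarith [hdigit n, hlow (n + 1)]
  have hconst : d = fun _ => k := funext fun n => (hle n).antisymm (hge n)
  refine zero_ne_one (injective_shiftn_greedyDigits hβ hx.1 hinj (?_ : shiftn 0 d = shiftn 1 d))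
  rw [hconst]
  rfl

lemma isReturnWord_of_forall_suffix_mapsTo {w : List ℕ} (htl : t ≤ l) (hh : h < 1) (hw : w ≠ [])
    (hmaps : ∀ v, v <:+ w → MapsTo (invBranch β v) (Icc l h) (Icc l h)) :
    IsReturnWord β t l h w where
  ne_nil := hw
  mapsTo := hmaps w List.suffix_rfl
  suffix_mapsTo v hv _ _ hs :=
    ⟨htl.trans (hmaps v hv hs).1, (hmaps v hv hs).2.trans_lt hh⟩

lemma invBranch_replicate (hβ : 1 < β) (k n : ℕ) (s : ℝ) :
    invBranch β (List.replicate n k) s = k / (β - 1) + (s - k / (β - 1)) / β ^ n := by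
  have hβ1 : β - 1 ≠ 0 := by linarith
  induction n with
  | zero => simp
  | succ n ih =>
    rw [List.replicate_succ, invBranch_cons, ih, pow_succ]
    field_simp
    ring

lemma invBranch_succ_cons_replicate (hβ : 1 < β) (k n : ℕ) (s : ℝ) :
    invBranch β ((k + 1) :: List.replicate n k) s =
      k / (β - 1) + β⁻¹ + (s - k / (β - 1)) / β ^ (n + 1) := by
  have hcons : invBranch β ((k + 1) :: List.replicate n k) s =
      β⁻¹ + invBranch β (List.replicate (n + 1) k) s := by
    rw [List.replicate_succ, invBranch_cons, invBranch_cons]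
    push_cast
    ring
  rw [hcons, invBranch_replicate hβ]
  ring

lemma mapsTo_invBranch_replicate (hβ : 1 < β) (k n : ℕ) (h : ℝ) :
    MapsTo (invBranch β (List.replicate n k)) (Icc (k / (β - 1)) h) (Icc (k / (β - 1)) h) := by
  intro s hs
  have hs0 : 0 ≤ s - k / (β - 1) := sub_nonneg.2 hs.1
  have hle := div_le_self hs0 (one_le_pow₀ hβ.le (n := n))
  have hnonneg : 0 ≤ (s - k / (β - 1)) / β ^ n := by positivity
  rw [invBranch_replicate hβ]
  exact ⟨by linarith, by linarith [hs.2]⟩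

lemma mapsTo_invBranch_succ_cons_replicate (hβ : 1 < β) (hh1 : h ≤ k / (β - 1) + 1)
    (hh : k / (β - 1) + β⁻¹ + (β ^ (n + 1))⁻¹ ≤ h) :
    MapsTo (invBranch β ((k + 1) :: List.replicate n k))
      (Icc (k / (β - 1)) h) (Icc (k / (β - 1)) h) := by
  intro s hs
  have hs0 : 0 ≤ s - k / (β - 1) := sub_nonneg.2 hs.1
  have hle : (s - k / (β - 1)) / β ^ (n + 1) ≤ (β ^ (n + 1))⁻¹ :=
    (div_le_div_of_nonneg_right (by linarith [hs.2]) (by positivity)).trans_eq (one_div _)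
  have hnonneg : 0 ≤ β⁻¹ + (s - k / (β - 1)) / β ^ (n + 1) := by positivity
  rw [invBranch_succ_cons_replicate hβ]
  exact ⟨by linarith, by linarith⟩

theorem div_le_tau_of_div_add_inv_lt_one (hβ : 1 < β) (hlt : k / (β - 1) + β⁻¹ < 1) :
    k / (β - 1) ≤ tau β := by
  have hβinv : β⁻¹ < 1 := inv_lt_one_of_one_lt₀ hβ
  set q := k / (β - 1) with hq
  have hq0 : 0 ≤ q := div_nonneg k.cast_nonneg (by linarith)
  obtain ⟨n, hn⟩ := exists_pow_lt_of_lt_one (sub_pos.2 hlt) hβinv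
  set h := q + β⁻¹ + (β ^ (n + 1))⁻¹ with hh
  have hqh : q ≤ h := by
    have : 0 ≤ β⁻¹ + (β ^ (n + 1))⁻¹ := by positivity
    linarith
  have hh1 : h < 1 := by
    have : β⁻¹ ^ (n + 1) ≤ β⁻¹ ^ n := pow_le_pow_of_le_one (by positivity) hβinv.le n.le_succ
    rw [hh, ← inv_pow]
    linarith
  have hu : IsReturnWord β q q h [k] :=
    isReturnWord_of_forall_suffix_mapsTo le_rfl hh1 (List.cons_ne_nil _ _) fun v hv => by
      rw [(List.suffix_replicate_iff (n := 1).1 hv).2]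
      exact mapsTo_invBranch_replicate hβ k _ h
  have hv : IsReturnWord β q q h ((k + 1) :: List.replicate n k) :=
    isReturnWord_of_forall_suffix_mapsTo le_rfl hh1 (List.cons_ne_nil _ _) fun v hv => by
      rcases List.suffix_cons_iff.1 hv with rfl | hv
      · exact mapsTo_invBranch_succ_cons_replicate hβ (by linarith) hh.ge
      · rw [(List.suffix_replicate_iff.1 hv).2]
        exact mapsTo_invBranch_replicate hβ k _ h
  refine le_tau_of_dimH_ne_zero
    (dimH_survivor_ne_zero_of_not_commute hβ hq0 hqh hu hv fun hcomm => ?_)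
  have hcomm_q := hcomm q
  have hbranch : ∀ s, invBranch β [k] s = q + (s - q) / β := fun s => by
    simpa using invBranch_replicate hβ k 1 s
  simp only [hbranch, invBranch_succ_cons_replicate hβ, ← hq, sub_self, zero_div, add_zero,
    add_sub_cancel_left] at hcomm_q
  have : β⁻¹ / β < β⁻¹ := div_lt_self (by positivity) hβ
  linarith

theorem not_continuousWithinAt_tau_of_div_add_inv_eq_one (hk : k ≠ 0) (hβ : 1 < β)
    (hroot : k / (β - 1) + β⁻¹ = 1) : ¬ ContinuousWithinAt tau (Ioi 1) β := by
  intro hc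
  have hβ1 : 0 < β - 1 := sub_pos.2 hβ
  have hcont : ContinuousAt (fun b : ℝ => k / (b - 1)) β :=
    continuousAt_const.div (continuousAt_id.sub continuousAt_const) hβ1.ne'
  have hright : (k : ℝ) / (β - 1) ≤ tau β := by
    refine le_of_tendsto_of_tendsto (hcont.tendsto.mono_left (nhdsWithin_le_nhds (s := Ioi β)))
      (hc.mono (Ioi_subset_Ioi hβ.le)) ?_
    filter_upwards [self_mem_nhdsWithin] with b (hb : β < b)
    refine div_le_tau_of_div_add_inv_lt_one (hβ.trans hb) (lt_of_lt_of_eq ?_ hroot)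
    gcongr
  have hlt : (k : ℝ) / β < k / (β - 1) :=
    div_lt_div_of_pos_left (by positivity) hβ1 (sub_one_lt β)
  exact (tau_le_div_of_div_add_inv_eq_one hk hβ hroot).not_gt (hlt.trans_le hright)

lemma exists_mem_Ioo_div_add_inv_eq_one (hk : k ≠ 0) :
    ∃ β ∈ Ioo (k + 1 : ℝ) (k + 2), k / (β - 1) + β⁻¹ = 1 := by
  have hk0 : (0 : ℝ) < k := by positivity
  have hcont : ContinuousOn (fun β : ℝ => k / (β - 1) + β⁻¹) (Icc (k + 1) (k + 2)) := by
    refine fun β hβ => ContinuousAt.continuousWithinAt ?_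
    have : β - 1 ≠ 0 := by linarith [hβ.1]
    have : β ≠ 0 := by linarith [hβ.1]
    fun_prop (disch := assumption)
  refine intermediate_value_Ioo' (by linarith) hcont ⟨?_, ?_⟩
  · have hk2 : (k : ℝ) + 2 - 1 = k + 1 := by ring
    rw [hk2, ← one_div, div_add_div _ _ (by positivity) (by positivity), div_lt_one (by positivity)]
    linarith
  · rw [add_sub_cancel_right, div_self hk0.ne', lt_add_iff_pos_right]
    positivity

theorem infinite_not_continuousWithinAt_tau :
    {β : ℝ | 1 < β ∧ ¬ ContinuousWithinAt tau (Ioi 1) β}.Infinite := by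
  refine infinite_of_forall_exists_gt fun r => ?_
  obtain ⟨k, hk⟩ := exists_nat_gt (max r 0)
  have hk0 : (0 : ℝ) < k := (le_max_right r 0).trans_lt hk
  obtain ⟨β, hβ, hroot⟩ := exists_mem_Ioo_div_add_inv_eq_one (Nat.cast_pos.1 hk0).ne'
  have hβ1 : 1 < β := by linarith [hβ.1]
  exact ⟨β, ⟨hβ1, not_continuousWithinAt_tau_of_div_add_inv_eq_one
    (Nat.cast_pos.1 hk0).ne' hβ1 hroot⟩, by linarith [hβ.1, le_max_left r 0]⟩

end Jumps

/-- The critical value function `τ` is left continuous at every point of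
`(1,∞)`, has right-hand limits at every point of `(1,∞)`, and its set of discontinuity
points is countably infinite. -/
theorem tau_left_cont_right_limits_countable_discontinuities :
    (∀ β₀ : ℝ, 1 < β₀ → Filter.Tendsto tau (𝓝[<] β₀) (𝓝 (tau β₀))) ∧
    (∀ β₀ : ℝ, 1 < β₀ → ∃ l : ℝ, Filter.Tendsto tau (𝓝[>] β₀) (𝓝 l)) ∧
    Set.Countable {β : ℝ | 1 < β ∧ ¬ ContinuousWithinAt tau (Set.Ioi 1) β} ∧
    Set.Infinite {β : ℝ | 1 < β ∧ ¬ ContinuousWithinAt tau (Set.Ioi 1) β} := by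
  exact ⟨fun _ => tendsto_tau_nhdsLT, fun _ => exists_tendsto_tau_nhdsGT,
    countable_not_continuousWithinAt_tau, infinite_not_continuousWithinAt_tau⟩
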